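/- Let q be a prime power and suppose a one-dimensional digital sequence over F_q is generated by a finite-row matrix C with Condition UD-rank for t = 0 and optimal row lengths (row j has length exactly j, i.e., c_{j,r} = 0 for r ≥ j and c_{j,j-1} ≠ 0, so that the m×m matrix (c_{j,r})_{1≤j≤m, 0≤r≤m-1} is invertible for all m). Let (s_n)_{n≥0} be a sequence in Z_q. Then the generated sequence (x_n) in [0,1] is uniformly distributed if and only if (s_n) is uniformly distributed in Z_q. -/

import Mathlib

def Zb (b : ℕ) : Subring (∀ k : ℕ, ZMod (b ^ k)) where
  carrier := {x | ∀ k, ZMod.castHom (pow_dvd_pow b (Nat.le_succ k)) (ZMod (b ^ k)) (x (k + 1)) = x k}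
  zero_mem' := fun k => map_zero _
  one_mem' := fun k => map_one _
  add_mem' := fun hx hy k => by rw [Pi.add_apply, map_add, hx k, hy k]; rfl
  mul_mem' := fun hx hy k => by rw [Pi.mul_apply, map_mul, hx k, hy k]; rfl
  neg_mem' := fun hx k => by rw [Pi.neg_apply, map_neg, hx k]; rfl

def natToZb (b : ℕ) (n : ℕ) : ↥(Zb b) := ⟨fun k => (n : ZMod (b ^ k)), fun k => map_natCast _ n⟩

def UDZb (b : ℕ) (x : ℕ → ↥(Zb b)) : Prop :=
  ∀ k : ℕ, 1 ≤ k → ∀ a : ZMod (b ^ k),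
    Filter.Tendsto
      (fun N => (((Finset.range N).filter (fun n => (x n).1 k = a)).card : ℝ) / N)
      Filter.atTop (nhds (1 / (b : ℝ) ^ k))

/-- The `r`-th `q`-adic digit of a `q`-adic integer `x`, as an element of `Fin q`. -/
def zbDigitF (q : ℕ) (hq : 0 < q) (x : ↥(Zb q)) (r : ℕ) : Fin q :=
  ⟨(x.1 (r + 1)).val / q ^ r % q, Nat.mod_lt _ hq⟩

/-- The one-dimensional digital point produced from the `q`-adic digits of `x` by the
generating matrix `c` (rows indexed from `1`) and bijections `ψ r`, `Λ j`. -/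
noncomputable def digPoint1 {F : Type} [Field F] (q : ℕ) (hq : 0 < q)
    (c : ℕ → ℕ → F) (ψ : ℕ → Fin q ≃ F) (Λ : ℕ → F ≃ Fin q) (x : ↥(Zb q)) : ℝ :=
  ∑' j : ℕ,
    (((Λ (j + 1)) (∑ᶠ r : ℕ, c (j + 1) r * ψ r (zbDigitF q hq x r)) : Fin q) : ℝ)
      / (q : ℝ) ^ (j + 1)

open Classical in
/-- Uniform distribution in `[0,1]` tested on `q`-adic intervals: every interval
`[a/q^d, (a+1)/q^d)` has asymptotic frequency `q^{-d}`. -/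
def UDInterval (q : ℕ) (x : ℕ → ℝ) : Prop :=
  ∀ d : ℕ, ∀ a : ℕ, a < q ^ d →
    Filter.Tendsto
      (fun N => (((Finset.range N).filter
        (fun n => (a : ℝ) / (q : ℝ) ^ d ≤ x n ∧ x n < ((a : ℝ) + 1) / (q : ℝ) ^ d)).card : ℝ) / N)
      Filter.atTop (nhds (1 / (q : ℝ) ^ d))


open Classical in
noncomputable def frq (p : ℕ → Prop) (N : ℕ) : ℝ := (((Finset.range N).filter p).card : ℝ) / N

lemma frq_le_add {p r s : ℕ → Prop} (h : ∀ n, p n → r n ∨ s n) (N : ℕ) :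
    frq p N ≤ frq r N + frq s N := by
  classical
  unfold frq
  rw [← add_div]
  gcongr
  norm_cast
  refine le_trans (Finset.card_le_card ?_) (Finset.card_union_le _ _)
  intro n hn
  simp only [Finset.mem_union, Finset.mem_filter] at hn ⊢
  rcases h n hn.2 with h | h
  · exact Or.inl ⟨hn.1, h⟩
  · exact Or.inr ⟨hn.1, h⟩

lemma frq_sum_le {M : ℕ} {Q : ℕ → ℕ → Prop} (h : ∀ a b n, Q a n → Q b n → a = b) (N : ℕ) :
    ∑ a ∈ Finset.range M, frq (Q a) N ≤ 1 := by
  classical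
  unfold frq
  rw [← Finset.sum_div]
  apply div_le_one_of_le₀ _ (Nat.cast_nonneg _)
  norm_cast
  rw [← Finset.card_biUnion]
  · refine le_trans (Finset.card_le_card (t := Finset.range N) ?_) (by simp)
    intro n hn
    simp only [Finset.mem_biUnion, Finset.mem_filter] at hn
    obtain ⟨a, _, h, _⟩ := hn
    exact h
  · intro a _ b _ hab
    rw [Function.onFun, Finset.disjoint_left]
    intro n hn hn'
    simp only [Finset.mem_filter] at hn hn'
    exact hab (h a b n hn.2 hn'.2)

lemma frq_transfer (q : ℕ) (hq : 2 ≤ q) (P Q : ℕ → ℕ → ℕ → Prop)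
    (hP : ∀ d a, a < q ^ d → Filter.Tendsto (frq (P d a)) Filter.atTop (nhds (1 / (q : ℝ) ^ d)))
    (hPQ : ∀ d a e, a < q ^ d → ∃ a' < q ^ (d + e), ∀ n, P d a n → Q d a n ∨ P (d + e) a' n)
    (hQ : ∀ d a b n, Q d a n → Q d b n → a = b) (d a : ℕ) (ha : a < q ^ d) :
    Filter.Tendsto (frq (Q d a)) Filter.atTop (nhds (1 / (q : ℝ) ^ d)) := by
  have hq1 : (1 : ℝ) < q := by exact_mod_cast hq
  have hqd : (0 : ℝ) < (q : ℝ) ^ d := by positivity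
  have low : ∀ ε > 0, ∀ a < q ^ d, ∀ᶠ N in Filter.atTop, 1 / (q : ℝ) ^ d - ε < frq (Q d a) N := by
    intro ε hε a ha
    obtain ⟨e, he⟩ := exists_pow_lt_of_lt_one (half_pos hε) (inv_lt_one_of_one_lt₀ hq1)
    obtain ⟨a', ha', h⟩ := hPQ d a e ha
    have hsmall : 1 / (q : ℝ) ^ (d + e) < ε / 2 := by
      refine lt_of_le_of_lt ?_ he
      rw [inv_pow, ← one_div]
      apply one_div_le_one_div_of_le (by positivity)
      exact pow_le_pow_right₀ hq1.le (by omega)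
    have h1 := (hP d a ha).eventually (lt_mem_nhds (show 1 / (q : ℝ) ^ d - ε / 2 < _ by linarith))
    have h2 := (hP (d + e) a' ha').eventually (gt_mem_nhds hsmall)
    filter_upwards [h1, h2] with N h1 h2
    have := frq_le_add h N
    linarith
  have lowall : ∀ ε > 0, ∀ᶠ N in Filter.atTop, ∀ a ∈ Finset.range (q ^ d),
      1 / (q : ℝ) ^ d - ε < frq (Q d a) N := by
    intro ε hε
    rw [Filter.eventually_all_finset]
    intro a ha
    exact low ε hε a (Finset.mem_range.1 ha)
  rw [Metric.tendsto_nhds]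
  intro ε hε
  have hε' : 0 < ε / (q : ℝ) ^ d := by positivity
  filter_upwards [lowall _ hε'] with N hN
  have hle : ε / (q : ℝ) ^ d ≤ ε := div_le_self hε.le (one_le_pow₀ hq1.le)
  have hs := frq_sum_le (M := q ^ d) (hQ d) N
  have ham := Finset.mem_range.2 ha
  rw [← Finset.add_sum_erase _ _ ham] at hs
  have h3 : ∑ b ∈ (Finset.range (q ^ d)).erase a, (1 / (q : ℝ) ^ d - ε / (q : ℝ) ^ d)
      ≤ ∑ b ∈ (Finset.range (q ^ d)).erase a, frq (Q d b) N :=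
    Finset.sum_le_sum fun b hb => (hN b (Finset.mem_of_mem_erase hb)).le
  have hcard : (((Finset.range (q ^ d)).erase a).card : ℝ) = (q : ℝ) ^ d - 1 := by
    rw [Finset.card_erase_of_mem ham, Finset.card_range, Nat.cast_sub (by omega)]
    push_cast; ring
  rw [Finset.sum_const, nsmul_eq_mul, hcard] at h3
  have h4 : ((q : ℝ) ^ d - 1) * (1 / (q : ℝ) ^ d - ε / (q : ℝ) ^ d)
      = 1 - 1 / (q : ℝ) ^ d - ε + ε / (q : ℝ) ^ d := by
    field_simp
    ring
  rw [h4] at h3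
  have h5 := hN a ham
  rw [Real.dist_eq, abs_lt]
  constructor <;> linarith

/-- Integer formed by the first `d` output digits. -/
def outY (q : ℕ) (o : ℕ → Fin q) : ℕ → ℕ
  | 0 => 0
  | d + 1 => q * outY q o d + (o d : ℕ)

lemma outY_lt (q : ℕ) (o : ℕ → Fin q) (d : ℕ) : outY q o d < q ^ d := by
  induction d with
  | zero => simp [outY]
  | succ d ih =>
    have := (o d).2
    rw [outY, pow_succ]
    nlinarith

lemma outY_div (q : ℕ) (hq : 0 < q) (o : ℕ → Fin q) (d e : ℕ) :
    outY q o (d + e) / q ^ e = outY q o d := by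
  induction e with
  | zero => simp
  | succ e ih =>
    rw [← add_assoc, outY, pow_succ', ← Nat.div_div_eq_div_mul, Nat.mul_add_div hq,
      Nat.div_eq_of_lt (o _).2, add_zero, ih]

lemma outY_eq_iff (q : ℕ) (o o' : ℕ → Fin q) (d : ℕ) :
    outY q o d = outY q o' d ↔ ∀ j < d, o j = o' j := by
  induction d with
  | zero => simp [outY]
  | succ d ih =>
    rw [outY, outY, Nat.forall_lt_succ_right, ← ih, Fin.ext_iff]
    have h1 := (o d).2
    have h2 := (o' d).2
    have hq : 0 < q := by omega
    constructor
    · intro h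
      have e1 := congrArg (· / q) h
      have e2 := congrArg (· % q) h
      simp only [Nat.mul_add_div hq, Nat.div_eq_of_lt h1, Nat.div_eq_of_lt h2,
        Nat.mul_add_mod, Nat.mod_eq_of_lt h1, Nat.mod_eq_of_lt h2, add_zero] at e1 e2
      exact ⟨e1, e2⟩
    · rintro ⟨h, h'⟩
      rw [h, h']

lemma outY_sum (q : ℕ) (hq : 0 < q) (o : ℕ → Fin q) (d : ℕ) :
    ∑ j ∈ Finset.range d, ((o j : ℕ) : ℝ) / (q : ℝ) ^ (j + 1) = outY q o d / (q : ℝ) ^ d := by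
  have : (0 : ℝ) < q := by exact_mod_cast hq
  induction d with
  | zero => simp [outY]
  | succ d ih =>
    rw [Finset.sum_range_succ, ih, outY]
    push_cast
    field_simp
    ring

lemma outY_bounds (q : ℕ) (hq : 2 ≤ q) (o : ℕ → Fin q) (d : ℕ) :
    (outY q o d : ℝ) / (q : ℝ) ^ d ≤ ∑' j : ℕ, ((o j : ℕ) : ℝ) / (q : ℝ) ^ (j + 1) ∧
    ∑' j : ℕ, ((o j : ℕ) : ℝ) / (q : ℝ) ^ (j + 1) ≤ ((outY q o d : ℝ) + 1) / (q : ℝ) ^ d := by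
  have hq1 : (1 : ℝ) < q := by exact_mod_cast hq
  have hq0 : (0 : ℝ) < q := by linarith
  have hsum : Summable fun j : ℕ => ((o j : ℕ) : ℝ) / (q : ℝ) ^ (j + 1) := by
    refine Summable.of_nonneg_of_le (fun j => by positivity) (fun j => ?_)
      (summable_geometric_of_lt_one (inv_nonneg.2 hq0.le) (inv_lt_one_of_one_lt₀ hq1))
    rw [inv_pow, div_le_iff₀ (by positivity), pow_succ, inv_mul_cancel_left₀ (by positivity)]
    exact_mod_cast (o j).2.le
  have ht := hsum.hasSum.tendsto_sum_nat
  simp only [outY_sum q (by omega) o] at ht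
  constructor
  · rw [← outY_sum q (by omega)]
    exact hsum.sum_le_tsum _ (fun j _ => by positivity)
  · have hz : Filter.Tendsto (fun n : ℕ => ((q : ℝ)⁻¹) ^ n) Filter.atTop (nhds 0) :=
      tendsto_pow_atTop_nhds_zero_of_lt_one (inv_nonneg.2 hq0.le) (inv_lt_one_of_one_lt₀ hq1)
    have ht2 := ht.add hz
    rw [add_zero] at ht2
    have hanti : Antitone fun n => (outY q o n : ℝ) / (q : ℝ) ^ n + ((q : ℝ)⁻¹) ^ n := by
      apply antitone_nat_of_succ_le
      intro n
      have : ((o n : ℕ) : ℝ) + 1 ≤ q := by exact_mod_cast (o n).2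
      rw [inv_pow, inv_pow, ← one_div, ← one_div, ← add_div, ← add_div,
        div_le_div_iff₀ (by positivity) (by positivity), outY, pow_succ]
      push_cast
      have hp : (0 : ℝ) < (q : ℝ) ^ n := by positivity
      nlinarith
    have := hanti.le_of_tendsto ht2 d
    rwa [inv_pow, ← one_div, ← add_div] at this

lemma ud_iff_outY (q : ℕ) (hq : 2 ≤ q) (o : ℕ → ℕ → Fin q) :
    UDInterval q (fun n => ∑' j : ℕ, ((o n j : ℕ) : ℝ) / (q : ℝ) ^ (j + 1)) ↔
    ∀ d a, a < q ^ d → Filter.Tendsto (frq (fun n => outY q (o n) d = a)) Filter.atTop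
      (nhds (1 / (q : ℝ) ^ d)) := by
  set x : ℕ → ℝ := fun n => ∑' j : ℕ, ((o n j : ℕ) : ℝ) / (q : ℝ) ^ (j + 1) with hx
  have hb : ∀ n d, (outY q (o n) d : ℝ) / (q : ℝ) ^ d ≤ x n ∧
      x n ≤ ((outY q (o n) d : ℝ) + 1) / (q : ℝ) ^ d := fun n d => outY_bounds q hq (o n) d
  have hq0 : (0 : ℝ) < q := by positivity
  let I : ℕ → ℕ → ℕ → Prop := fun d a n =>
    (a : ℝ) / (q : ℝ) ^ d ≤ x n ∧ x n < ((a : ℝ) + 1) / (q : ℝ) ^ d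
  let J : ℕ → ℕ → ℕ → Prop := fun d a n => outY q (o n) d = a
  have hI : UDInterval q x ↔ ∀ d a, a < q ^ d → Filter.Tendsto (frq (I d a)) Filter.atTop
      (nhds (1 / (q : ℝ) ^ d)) := by
    have key : ∀ d a : ℕ, (frq (I d a)) = (frq (fun n =>
        (a : ℝ) / (q : ℝ) ^ d ≤ x n ∧ x n < ((a : ℝ) + 1) / (q : ℝ) ^ d)) := fun _ _ => rfl
    simp only [key]
    unfold UDInterval frq
    congr!
  rw [hI]
  change (∀ d a, a < q ^ d → Filter.Tendsto (frq (I d a)) Filter.atTop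
      (nhds (1 / (q : ℝ) ^ d))) ↔ (∀ d a, a < q ^ d → Filter.Tendsto (frq (J d a)) Filter.atTop
      (nhds (1 / (q : ℝ) ^ d)))
  constructor
  · intro h
    refine frq_transfer q hq I J h ?_ ?_
    · intro d a e ha
      have hqe : 0 < q ^ e := by positivity
      refine ⟨a * q ^ e, by rw [pow_add]; exact Nat.mul_lt_mul_of_pos_right ha hqe, ?_⟩
      intro n hn
      by_cases hY : outY q (o n) d = a
      · exact Or.inl hY
      right
      obtain ⟨h1, h2⟩ := hn
      have hd : (0 : ℝ) < (q : ℝ) ^ d := by positivity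
      have hle : outY q (o n) d < a + 1 := by
        have := lt_of_le_of_lt (hb n d).1 h2
        rw [div_lt_div_iff_of_pos_right hd] at this
        exact_mod_cast this
      have hle2 : (outY q (o n) d : ℝ) + 1 ≤ a := by
        have : outY q (o n) d + 1 ≤ a := by omega
        exact_mod_cast this
      have hxe : x n = a / (q : ℝ) ^ d :=
        le_antisymm ((hb n d).2.trans (by gcongr)) h1
      have hk : ((a * q ^ e : ℕ) : ℝ) / (q : ℝ) ^ (d + e) = a / (q : ℝ) ^ d := by
        push_cast; rw [pow_add]; field_simp
      refine ⟨by rw [hk, hxe], ?_⟩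
      rw [hxe, ← hk]
      gcongr
      linarith
    · intro d a b n h1 h2
      exact h1.symm.trans h2
  · intro h
    refine frq_transfer q hq J I h ?_ ?_
    · intro d a e ha
      have hqe : 0 < q ^ e := by positivity
      have h0 : (a + 1) * q ^ e ≤ q ^ (d + e) := by
        rw [pow_add]; exact Nat.mul_le_mul_right _ ha
      have h00 : 0 < (a + 1) * q ^ e := by positivity
      refine ⟨(a + 1) * q ^ e - 1, by omega, ?_⟩
      intro n hn
      change outY q (o n) d = a at hn
      have hbd := hb n d
      rw [hn] at hbd
      by_cases hlt : x n < ((a : ℝ) + 1) / (q : ℝ) ^ d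
      · exact Or.inl ⟨hbd.1, hlt⟩
      right
      change outY q (o n) (d + e) = _
      have hdv := outY_div q (by omega) (o n) d e
      rw [hn] at hdv
      have hup : outY q (o n) (d + e) < (a + 1) * q ^ e := by
        rw [← Nat.div_lt_iff_lt_mul hqe]; omega
      have hlow : (a + 1) * q ^ e ≤ outY q (o n) (d + e) + 1 := by
        have := (not_lt.1 hlt).trans (hb n (d + e)).2
        rw [div_le_div_iff₀ (by positivity) (by positivity), pow_add] at this
        have hd : (0 : ℝ) < (q : ℝ) ^ d := by positivity
        have h5 : ((a : ℝ) + 1) * (q : ℝ) ^ e ≤ outY q (o n) (d + e) + 1 := by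
          refine le_of_mul_le_mul_right ?_ hd
          linarith
        exact_mod_cast h5
      omega
    · intro d a b n h1 h2
      have hd : (0 : ℝ) < (q : ℝ) ^ d := by positivity
      have e1 := lt_of_le_of_lt h1.1 h2.2
      have e2 := lt_of_le_of_lt h2.1 h1.2
      rw [div_lt_div_iff_of_pos_right hd] at e1 e2
      have e1' : a < b + 1 := by exact_mod_cast e1
      have e2' : b < a + 1 := by exact_mod_cast e2
      omega

lemma zb_val_succ (q : ℕ) (hq : 0 < q) (z : ↥(Zb q)) (d : ℕ) :
    (z.1 (d + 1)).val = (z.1 d).val + q ^ d * (zbDigitF q hq z d : ℕ) := by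
  have : NeZero q := ⟨hq.ne'⟩
  have h := z.2 d
  have h1 : (z.1 d).val = (z.1 (d + 1)).val % q ^ d := by
    rw [← h, ZMod.castHom_apply, ZMod.cast_eq_val, ZMod.val_natCast]
  have h2 : (z.1 (d + 1)).val / q ^ d < q := by
    rw [Nat.div_lt_iff_lt_mul (by positivity), ← pow_succ']
    exact ZMod.val_lt _
  rw [h1, zbDigitF]
  simp only [Nat.mod_eq_of_lt h2]
  exact (Nat.mod_add_div _ _).symm

lemma zb_eq_iff (q : ℕ) (hq : 0 < q) (z z' : ↥(Zb q)) (d : ℕ) :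
    z.1 d = z'.1 d ↔ ∀ j < d, zbDigitF q hq z j = zbDigitF q hq z' j := by
  have : NeZero q := ⟨hq.ne'⟩
  induction d with
  | zero =>
    simp only [Nat.not_lt_zero, false_imp_iff, implies_true, iff_true]
    have h1 := ZMod.val_lt (z.1 0)
    have h2 := ZMod.val_lt (z'.1 0)
    apply ZMod.val_injective
    have h3 : q ^ 0 = 1 := pow_zero q
    omega
  | succ d ih =>
    rw [Nat.forall_lt_succ_right]
    constructor
    · intro h
      refine ⟨ih.1 (by rw [← z.2 d, ← z'.2 d, h]), ?_⟩
      simp only [zbDigitF, h]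
    · rintro ⟨h1, h2⟩
      apply ZMod.val_injective
      rw [zb_val_succ q hq, zb_val_succ q hq, ih.2 h1, h2]

/-- Output digits. -/
noncomputable def outD {F : Type} [Field F] (q : ℕ) (hq : 0 < q)
    (c : ℕ → ℕ → F) (ψ : ℕ → Fin q ≃ F) (Λ : ℕ → F ≃ Fin q) (x : ↥(Zb q)) (j : ℕ) : Fin q :=
  (Λ (j + 1)) (∑ᶠ r : ℕ, c (j + 1) r * ψ r (zbDigitF q hq x r))

lemma outD_iff {F : Type} [Field F] (q : ℕ) (hq0 : 0 < q) (c : ℕ → ℕ → F)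
    (hlen : ∀ j r : ℕ, 1 ≤ j → j ≤ r → c j r = 0)
    (hinv : ∀ m : ℕ, IsUnit (Matrix.of (fun j r : Fin m => c (j.1 + 1) r.1)).det)
    (ψ : ℕ → Fin q ≃ F) (Λ : ℕ → F ≃ Fin q) (z z' : ↥(Zb q)) (d : ℕ) :
    (∀ j < d, outD q hq0 c ψ Λ z j = outD q hq0 c ψ Λ z' j) ↔ z.1 d = z'.1 d := by
  rw [zb_eq_iff q hq0]
  have key : ∀ (z : ↥(Zb q)) (j : Fin d), ∑ᶠ r : ℕ, c (j.1 + 1) r * ψ r (zbDigitF q hq0 z r) =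
      (Matrix.of (fun j r : Fin d => c (j.1 + 1) r.1)).mulVec
        (fun r : Fin d => ψ r (zbDigitF q hq0 z r)) j := by
    intro z j
    rw [finsum_eq_sum_of_support_subset (s := Finset.range d), Finset.sum_range]
    · rfl
    · intro r hr
      rw [Function.mem_support] at hr
      by_contra hcon
      apply hr
      rw [hlen _ _ (by omega) (by simp at hcon; omega), zero_mul]
  constructor
  · intro h
    have h2 : (Matrix.of (fun j r : Fin d => c (j.1 + 1) r.1)).mulVec
        (fun r : Fin d => ψ r (zbDigitF q hq0 z r)) =
        (Matrix.of (fun j r : Fin d => c (j.1 + 1) r.1)).mulVec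
        (fun r : Fin d => ψ r (zbDigitF q hq0 z' r)) := by
      funext j
      rw [← key, ← key]
      exact (Λ (j.1 + 1)).injective (h j.1 j.2)
    have h3 := Matrix.mulVec_injective_of_isUnit ((Matrix.isUnit_iff_isUnit_det _).2 (hinv d)) h2
    intro j hj
    exact (ψ j).injective (congrFun h3 ⟨j, hj⟩)
  · intro h j hj
    unfold outD
    rw [key z ⟨j, hj⟩, key z' ⟨j, hj⟩]
    congr 3
    funext r
    rw [h r.1 r.2]

/-- one-dimensional case: let `c` be a finite-row generating matrix over `F_q`
with optimal row lengths, i.e. `c_{j,r} = 0` for `r ≥ j` (rows indexed from `1`) and every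
leading `m × m` submatrix invertible (Condition UD-rank for `t = 0`). For any sequence
`(s_n)` in `Z_q`, the generated sequence in `[0,1]` is uniformly distributed if and only if
`(s_n)` is uniformly distributed in `Z_q`. -/
theorem stmt_19 {F : Type} [Field F] [Fintype F] (q : ℕ) (hq : Fintype.card F = q)
    (hq0 : 0 < q) (c : ℕ → ℕ → F)
    (hlen : ∀ j r : ℕ, 1 ≤ j → j ≤ r → c j r = 0)
    (hinv : ∀ m : ℕ, IsUnit (Matrix.of (fun j r : Fin m => c (j.1 + 1) r.1)).det)
    (ψ : ℕ → Fin q ≃ F) (Λ : ℕ → F ≃ Fin q) (sn : ℕ → ↥(Zb q)) :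
    UDInterval q (fun n => digPoint1 q hq0 c ψ Λ (sn n)) ↔ UDZb q sn := by
  have hq2 : 2 ≤ q := by rw [← hq]; exact Fintype.one_lt_card
  have : NeZero q := ⟨hq0.ne'⟩
  refine (ud_iff_outY q hq2 (fun n => outD q hq0 c ψ Λ (sn n))).trans ?_
  have hYiff : ∀ (z z' : ↥(Zb q)) d, outY q (outD q hq0 c ψ Λ z) d =
      outY q (outD q hq0 c ψ Λ z') d ↔ z.1 d = z'.1 d := fun z z' d =>
    (outY_eq_iff q _ _ d).trans (outD_iff q hq0 c hlen hinv ψ Λ z z' d)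
  have hnat : ∀ d (b : ZMod (q ^ d)), (natToZb q b.val).1 d = b := fun d b =>
    ZMod.natCast_zmod_val b
  have hsurj : ∀ d a, a < q ^ d → ∃ b : ZMod (q ^ d),
      outY q (outD q hq0 c ψ Λ (natToZb q b.val)) d = a := by
    intro d a ha
    let g : ZMod (q ^ d) → Fin (q ^ d) := fun b =>
      ⟨outY q (outD q hq0 c ψ Λ (natToZb q b.val)) d, outY_lt _ _ _⟩
    have hg : Function.Injective g := by
      intro b b' h
      have := (hYiff _ _ d).1 (Fin.mk.inj h)
      rwa [hnat, hnat] at this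
    have hbij := (Fintype.bijective_iff_injective_and_card g).2 ⟨hg, by simp [ZMod.card]⟩
    obtain ⟨b, hb⟩ := hbij.2 ⟨a, ha⟩
    exact ⟨b, Fin.mk.inj hb⟩
  have hZ : UDZb q sn ↔ ∀ k : ℕ, 1 ≤ k → ∀ a : ZMod (q ^ k),
      Filter.Tendsto (frq (fun n => (sn n).1 k = a)) Filter.atTop (nhds (1 / (q : ℝ) ^ k)) := by
    unfold UDZb
    have : ∀ (k : ℕ) (a : ZMod (q ^ k)), (fun N : ℕ =>
        (((Finset.range N).filter (fun n => (sn n).1 k = a)).card : ℝ) / N)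
        = frq (fun n => (sn n).1 k = a) := by
      intro k a
      funext N
      unfold frq
      congr!
    simp only [this]
  rw [hZ]
  constructor
  · intro h k _ b
    have := h k _ (outY_lt q (outD q hq0 c ψ Λ (natToZb q b.val)) k)
    simp only [hYiff, hnat] at this
    exact this
  · intro h d a ha
    rcases Nat.eq_zero_or_pos d with rfl | hd
    · have ha0 : a = 0 := by simpa using ha
      subst ha0
      rw [pow_zero, div_one]
      refine tendsto_const_nhds.congr' ?_
      filter_upwards [Filter.eventually_gt_atTop 0] with N hN
      have : (N : ℝ) ≠ 0 := by positivity
      simp [frq, outY, this]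
    · obtain ⟨b, rfl⟩ := hsurj d a ha
      simp only [hYiff, hnat]
      exact h d hd b
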